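/- Let d ≥ 3 and let Z = (Z_1,…,Z_d) be a centered Gaussian vector in ℝ^d with E[Z_j²] ≥ 1 for every j. Then there is a universal constant C such that for every z ∈ ℝ^d and ε > 0, P(Z ≤ z + ε·1) − P(Z ≤ z) ≤ C ε √(log d). -/

import Mathlib

open MeasureTheory ProbabilityTheory

/-!
Subtracting `z` and rescaling, it suffices to bound the density of `max_j Y j` for a Gaussian
vector `Y` with unit variances. Split according to the index `j` at which the maximum is attained,
and write `Y = W + Y j • ρ` with `ρ k = cov (Y j, Y k) ≤ 1 = ρ j` and `W` independent of `Y j`.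
Since `Y j` gains on every other coordinate as it grows, for fixed `W` the event that `j` attains
the maximum is an upper set `U` in `Y j`. By Mills' ratio the density of `Y j` on `U` is at most
`(T + 1) P(U)` below the level `E Y j + T`, and beyond it is at most `φ(T)`. Summing over the `d`
indices gives the bound `T + 1 + d φ(T)`, which is at most `T + 2` for `T = √(2 log d)`.
-/

open Filter Set
open scoped ENNReal NNReal

section GaussianDensity

lemma hasDerivAt_gaussianPDFReal (m : ℝ) (v : ℝ≥0) (x : ℝ) :
    HasDerivAt (gaussianPDFReal m v) (-((x - m) / v) * gaussianPDFReal m v x) x := by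
  have h_exponent : HasDerivAt (fun t ↦ -(t - m) ^ 2 / (2 * v)) (-((x - m) / v)) x := by
    refine ((((hasDerivAt_id x).sub_const m).fun_pow 2).fun_neg.div_const
      (2 * v : ℝ)).congr_deriv ?_
    simp only [id, Nat.cast_ofNat, Nat.add_one_sub_one, pow_one, mul_one]
    rw [← mul_neg, mul_div_mul_left _ _ two_ne_zero, neg_div]
  refine (h_exponent.exp.const_mul (√(2 * Real.pi * v))⁻¹).congr_deriv ?_
  rw [gaussianPDFReal]
  ring

lemma gaussianPDFReal_le_of_abs_sub_le {m x y : ℝ} (v : ℝ≥0) (h : |y - m| ≤ |x - m|) :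
    gaussianPDFReal m v x ≤ gaussianPDFReal m v y := by
  have h_sq : (y - m) ^ 2 ≤ (x - m) ^ 2 := sq_le_sq.mpr h
  unfold gaussianPDFReal
  gcongr

lemma gaussianPDFReal_one_le_exp (m x : ℝ) :
    gaussianPDFReal m 1 x ≤ Real.exp (-(x - m) ^ 2 / 2) := by
  have h_norm : (√(2 * Real.pi))⁻¹ ≤ 1 :=
    inv_le_one_of_one_le₀ (Real.one_le_sqrt.mpr (by linarith [Real.pi_gt_three]))
  simpa [gaussianPDFReal] using mul_le_of_le_one_left (Real.exp_pos (-(x - m) ^ 2 / 2)).le h_norm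

lemma tendsto_gaussianPDFReal_div_atTop (m : ℝ) :
    Tendsto (fun x ↦ gaussianPDFReal m 1 x / (x - m + 1)) atTop (nhds 0) := by
  have h_atTop : Tendsto (fun x ↦ x - m + 1) atTop atTop :=
    tendsto_atTop_add_const_right _ _ (tendsto_atTop_add_const_right _ _ tendsto_id)
  have h_bound (x : ℝ) : gaussianPDFReal m 1 x ≤ 1 :=
    (gaussianPDFReal_one_le_exp m x).trans
      (Real.exp_le_one_iff.mpr (by linarith [sq_nonneg (x - m)]))
  refine squeeze_zero' ?_ ?_ (tendsto_inv_atTop_zero.comp h_atTop)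
  all_goals filter_upwards [h_atTop.eventually_gt_atTop 0] with x hx
  · exact div_nonneg (gaussianPDFReal_nonneg m 1 x) hx.le
  · exact (div_le_div_of_nonneg_right (h_bound x) hx.le).trans_eq (one_div _)

lemma gaussianPDFReal_div_le_integral_Ioi {m x : ℝ} (hx : m ≤ x) :
    gaussianPDFReal m 1 x / (x - m + 1) ≤ ∫ t in Ioi x, gaussianPDFReal m 1 t := by
  let g' (t : ℝ) : ℝ :=
    gaussianPDFReal m 1 t * (((t - m) ^ 2 + (t - m) + 1) / (t - m + 1) ^ 2)
  have h_deriv (t : ℝ) (ht : t ∈ Ici x) :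
      HasDerivAt (fun t ↦ -(gaussianPDFReal m 1 t / (t - m + 1))) (g' t) t := by
    have h_ne : t - m + 1 ≠ 0 := by linarith [mem_Ici.mp ht]
    refine (((hasDerivAt_gaussianPDFReal m 1 t).fun_div
      (((hasDerivAt_id t).sub_const m).add_const 1) h_ne).fun_neg).congr_deriv ?_
    simp only [id, NNReal.coe_one, g']
    field_simp
    ring
  have h_nonneg (t : ℝ) (ht : t ∈ Ioi x) : 0 ≤ g' t := by
    have h_pos : 0 ≤ t - m := by linarith [mem_Ioi.mp ht]
    have := gaussianPDFReal_nonneg m 1 t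
    positivity
  have h_le (t : ℝ) (ht : t ∈ Ioi x) : g' t ≤ gaussianPDFReal m 1 t := by
    have h_pos : 0 ≤ t - m := by linarith [mem_Ioi.mp ht]
    refine mul_le_of_le_one_right (gaussianPDFReal_nonneg m 1 t) ?_
    rw [div_le_one (by positivity)]
    linarith
  have h_lim : Tendsto (fun t ↦ -(gaussianPDFReal m 1 t / (t - m + 1))) atTop (nhds 0) := by
    simpa using (tendsto_gaussianPDFReal_div_atTop m).neg
  calc gaussianPDFReal m 1 x / (x - m + 1)
    _ = ∫ t in Ioi x, g' t := by
      rw [integral_Ioi_of_hasDerivAt_of_nonneg' h_deriv h_nonneg h_lim, zero_sub, neg_neg]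
    _ ≤ ∫ t in Ioi x, gaussianPDFReal m 1 t :=
      setIntegral_mono_on (integrableOn_Ioi_deriv_of_nonneg' h_deriv h_nonneg h_lim)
        (integrable_gaussianPDFReal m 1).integrableOn measurableSet_Ioi h_le

lemma gaussianPDFReal_le_mul_integral_Ioi (m x : ℝ) :
    gaussianPDFReal m 1 x ≤ (max x m - m + 1) * ∫ t in Ioi x, gaussianPDFReal m 1 t := by
  have h_pos : 0 < max x m - m + 1 := by linarith [le_max_right x m]
  have h_abs : |max x m - m| ≤ |x - m| := by
    rcases max_choice x m with h | h <;> simp [h]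
  calc gaussianPDFReal m 1 x
    _ ≤ gaussianPDFReal m 1 (max x m) := gaussianPDFReal_le_of_abs_sub_le 1 h_abs
    _ ≤ (max x m - m + 1) * ∫ t in Ioi (max x m), gaussianPDFReal m 1 t :=
      (div_le_iff₀' h_pos).mp (gaussianPDFReal_div_le_integral_Ioi (le_max_right x m))
    _ ≤ (max x m - m + 1) * ∫ t in Ioi x, gaussianPDFReal m 1 t := by
      gcongr
      · exact ae_of_all _ (gaussianPDFReal_nonneg m 1)
      · exact (integrable_gaussianPDFReal m 1).integrableOn
      · exact le_max_left x m

variable {m T : ℝ} {U : Set ℝ}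

lemma gaussianPDF_le_of_mem_isUpperSet (hU : IsUpperSet U) (hT : 0 ≤ T) {x : ℝ} (hx : x ∈ U) :
    gaussianPDF m 1 x ≤ ENNReal.ofReal (T + 1) * gaussianReal m 1 U + gaussianPDF 0 1 T := by
  rcases le_total (x - m) T with h | h
  · have h_max : max x m - m ≤ T :=
      sub_le_iff_le_add.mpr (max_le (by linarith) (by linarith))
    calc gaussianPDF m 1 x
      _ ≤ ENNReal.ofReal ((T + 1) * ∫ t in Ioi x, gaussianPDFReal m 1 t) := by
        refine ENNReal.ofReal_le_ofReal ((gaussianPDFReal_le_mul_integral_Ioi m x).trans ?_)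
        gcongr
        exact setIntegral_nonneg measurableSet_Ioi fun t _ ↦ gaussianPDFReal_nonneg m 1 t
      _ = ENNReal.ofReal (T + 1) * gaussianReal m 1 (Ioi x) := by
        rw [ENNReal.ofReal_mul (by positivity), gaussianReal_apply_eq_integral m one_ne_zero]
      _ ≤ ENNReal.ofReal (T + 1) * gaussianReal m 1 U := by
        gcongr
        exact hU.Ioi_subset hx
      _ ≤ _ := le_self_add
  · calc gaussianPDF m 1 x
      _ = gaussianPDF 0 1 (x - m) := by rw [gaussianPDF, gaussianPDF, gaussianPDFReal_sub, zero_add]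
      _ ≤ gaussianPDF 0 1 T := by
        refine ENNReal.ofReal_le_ofReal (gaussianPDFReal_le_of_abs_sub_le 1 ?_)
        simpa [abs_of_nonneg hT] using h.trans (le_abs_self _)
      _ ≤ _ := le_add_self

lemma gaussianReal_inter_le_of_isUpperSet (hU : IsUpperSet U) (hT : 0 ≤ T) (I : Set ℝ) :
    gaussianReal m 1 (U ∩ I)
      ≤ volume I * (ENNReal.ofReal (T + 1) * gaussianReal m 1 U + gaussianPDF 0 1 T) := by
  set c := ENNReal.ofReal (T + 1) * gaussianReal m 1 U + gaussianPDF 0 1 T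
  calc gaussianReal m 1 (U ∩ I)
    _ = ∫⁻ x in U ∩ I, gaussianPDF m 1 x := gaussianReal_apply m one_ne_zero _
    _ ≤ ∫⁻ _ in U ∩ I, c :=
      setLIntegral_mono measurable_const fun x hx ↦ gaussianPDF_le_of_mem_isUpperSet hU hT hx.1
    _ = c * volume (U ∩ I) := setLIntegral_const _ _
    _ ≤ volume I * c := by
      rw [mul_comm]
      gcongr
      exact inter_subset_right

lemma nat_mul_gaussianPDF_sqrt_two_mul_log_le_one (n : ℕ) :
    n * gaussianPDF 0 1 √(2 * Real.log n) ≤ 1 := by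
  rcases n.eq_zero_or_pos with rfl | hn
  · simp
  have h_pos : (0 : ℝ) < n := Nat.cast_pos.mpr hn
  have h_log : 0 ≤ 2 * Real.log n := by positivity
  have h_pdf : gaussianPDFReal 0 1 √(2 * Real.log n) ≤ (n : ℝ)⁻¹ := by
    refine (gaussianPDFReal_one_le_exp 0 _).trans_eq ?_
    rw [sub_zero, Real.sq_sqrt h_log, neg_div, mul_div_cancel_left₀ _ two_ne_zero, Real.exp_neg,
      Real.exp_log h_pos]
  rw [gaussianPDF, ← ENNReal.ofReal_natCast, ← ENNReal.ofReal_mul h_pos.le, ENNReal.ofReal_le_one]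
  exact (mul_le_mul_of_nonneg_left h_pdf h_pos.le).trans_eq (mul_inv_cancel₀ h_pos.ne')

end GaussianDensity

section FirstArgmax

variable {ι : Type*} [LinearOrder ι]

/-- The vectors whose maximal coordinate is attained at `j` and at no smaller index. Breaking ties
by the order of `ι` makes these sets disjoint, so that the corresponding events partition the
probability space even when coordinates of the Gaussian vector coincide. -/
def firstArgmax (j : ι) : Set (ι → ℝ) :=
  {v | (∀ k, v k ≤ v j) ∧ ∀ k < j, v k < v j}

lemma measurableSet_firstArgmax [Countable ι] (j : ι) : MeasurableSet (firstArgmax j) := by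
  have h_le (k : ι) : MeasurableSet {v : ι → ℝ | v k ≤ v j} :=
    measurableSet_le (measurable_pi_apply k) (measurable_pi_apply j)
  have h_lt (k : ι) : MeasurableSet {v : ι → ℝ | v k < v j} :=
    measurableSet_lt (measurable_pi_apply k) (measurable_pi_apply j)
  simp only [firstArgmax, Set.ofPred_and, Set.ofPred_forall]
  exact (MeasurableSet.iInter h_le).inter
    (MeasurableSet.iInter fun k ↦ MeasurableSet.iInter fun _ ↦ h_lt k)

lemma pairwise_disjoint_firstArgmax :
    Pairwise (Function.onFun Disjoint (firstArgmax (ι := ι))) := by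
  refine (pairwise_disjoint_on _).mpr fun i j hij ↦ disjoint_left.mpr fun v hi hj ↦ ?_
  exact (hj.2 i hij).not_ge (hi.1 j)

lemma exists_mem_firstArgmax [Finite ι] [Nonempty ι] (v : ι → ℝ) : ∃ j, v ∈ firstArgmax j := by
  obtain ⟨j, hj_max, hj_min⟩ :=
    exists_min_image {j | ∀ k, v k ≤ v j} id (toFinite _) (Finite.exists_max v)
  refine ⟨j, hj_max, fun k hkj ↦ (hj_max k).lt_of_ne fun hk ↦ hkj.not_ge ?_⟩
  exact hj_min k fun l ↦ hk ▸ hj_max l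

lemma iSup_eq_of_mem_firstArgmax {j : ι} {v : ι → ℝ} (hv : v ∈ firstArgmax j) :
    ⨆ k, v k = v j :=
  have : Nonempty ι := ⟨j⟩
  ciSup_eq_of_forall_le_of_forall_lt_exists_gt hv.1 fun _ h ↦ ⟨j, h⟩

lemma add_smul_mem_firstArgmax {j : ι} {v ρ : ι → ℝ} {t : ℝ} (hv : v ∈ firstArgmax j)
    (hρ : ∀ k, ρ k ≤ ρ j) (ht : 0 ≤ t) : v + t • ρ ∈ firstArgmax j := by
  have h_gain (k : ι) : t * ρ k ≤ t * ρ j := mul_le_mul_of_nonneg_left (hρ k) ht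
  exact ⟨fun k ↦ add_le_add (hv.1 k) (h_gain k),
    fun k hkj ↦ add_lt_add_of_lt_of_le (hv.2 k hkj) (h_gain k)⟩

end FirstArgmax

section GaussianVector

variable {Ω : Type*} {mΩ : MeasurableSpace Ω} {P : Measure Ω}

lemma two_mul_covariance_le [IsFiniteMeasure P] {X Y : Ω → ℝ} (hX : MemLp X 2 P)
    (hY : MemLp Y 2 P) : 2 * cov[X, Y; P] ≤ Var[X; P] + Var[Y; P] := by
  have h := variance_nonneg (X - Y) P
  rw [variance_sub hX hY] at h
  linarith

lemma measure_mem_and_mem_le_of_indepFun {E : Type*} [MeasurableSpace E]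
    {X : Ω → ℝ} {W : Ω → E} {m T : ℝ} {S : Set (ℝ × E)} {I : Set ℝ}
    (hX : HasLaw X (gaussianReal m 1) P) (hW : AEMeasurable W P) (hXW : IndepFun X W P)
    (hS : MeasurableSet S) (hS_upper : ∀ w, IsUpperSet {x | (x, w) ∈ S})
    (hI : MeasurableSet I) (hT : 0 ≤ T) :
    P {ω | (X ω, W ω) ∈ S ∧ X ω ∈ I}
      ≤ volume I * (ENNReal.ofReal (T + 1) * P {ω | (X ω, W ω) ∈ S} + gaussianPDF 0 1 T) := by
  have : IsProbabilityMeasure P := hX.isProbabilityMeasure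
  have : IsProbabilityMeasure (P.map W) := P.isProbabilityMeasure_map hW
  have h_law : HasLaw (fun ω ↦ (X ω, W ω)) ((gaussianReal m 1).prod (P.map W)) P :=
    (indepFun_iff_hasLaw_prodMk_prod hX ⟨hW, rfl⟩).mp hXW
  have hSI : MeasurableSet (S ∩ Prod.fst ⁻¹' I) := hS.inter (measurable_fst hI)
  have h_section : Measurable fun w ↦ gaussianReal m 1 {x | (x, w) ∈ S} :=
    measurable_measure_prodMk_right hS
  calc P {ω | (X ω, W ω) ∈ S ∧ X ω ∈ I}
    _ = ∫⁻ w, gaussianReal m 1 ({x | (x, w) ∈ S} ∩ I) ∂P.map W :=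
      (h_law.measure_eq (p := (· ∈ S ∩ Prod.fst ⁻¹' I)) hSI).trans (Measure.prod_apply_symm hSI)
    _ ≤ ∫⁻ w, volume I * (ENNReal.ofReal (T + 1) * gaussianReal m 1 {x | (x, w) ∈ S}
          + gaussianPDF 0 1 T) ∂P.map W :=
      lintegral_mono fun w ↦ gaussianReal_inter_le_of_isUpperSet (hS_upper w) hT I
    _ = volume I * (ENNReal.ofReal (T + 1) * ∫⁻ w, gaussianReal m 1 {x | (x, w) ∈ S} ∂P.map W
          + gaussianPDF 0 1 T) := by
      rw [lintegral_const_mul _ (by fun_prop), lintegral_add_right _ measurable_const,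
        lintegral_const_mul _ h_section, lintegral_const, measure_univ, mul_one]
    _ = volume I * (ENNReal.ofReal (T + 1) * P {ω | (X ω, W ω) ∈ S} + gaussianPDF 0 1 T) := by
      rw [h_law.measure_eq (p := (· ∈ S)) hS]
      congr 3
      exact (Measure.prod_apply_symm hS).symm

lemma hasLaw_gaussianReal_of_variance_eq_one {X : Ω → ℝ} (hX : HasGaussianLaw X P)
    (hvar : Var[X; P] = 1) : HasLaw X (gaussianReal P[X] 1) P where
  aemeasurable := hX.aemeasurable
  map_eq := by rw [hX.map_eq_gaussianReal, hvar, Real.toNNReal_one]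

variable {ι : Type*} {Y : Ω → ι → ℝ}

lemma indepFun_sub_covariance_smul [Finite ι] (hY : HasGaussianLaw Y P) {j : ι}
    (hvar : Var[fun ω ↦ Y ω j; P] = 1) :
    IndepFun (fun ω ↦ Y ω j)
      (fun ω ↦ Y ω - Y ω j • fun k ↦ cov[fun ω ↦ Y ω j, fun ω ↦ Y ω k; P]) P := by
  have := hY.isProbabilityMeasure
  have := Fintype.ofFinite ι
  have hL2 (k : ι) : MemLp (fun ω ↦ Y ω k) 2 P := (hY.eval k).memLp_two
  set ρ : ι → ℝ := fun k ↦ cov[fun ω ↦ Y ω j, fun ω ↦ Y ω k; P]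
  let L : (ι → ℝ) →L[ℝ] (Unit → ℝ) × (ι → ℝ) :=
    (ContinuousLinearMap.pi fun _ ↦ .proj j).prod
      (ContinuousLinearMap.pi fun k ↦ .proj k - ρ k • .proj j)
  have h_indep := (hY.map_fun L).indepFun_of_covariance_eval
    (X := fun _ ω ↦ Y ω j) (Y := fun k ω ↦ Y ω k - ρ k * Y ω j) fun _ k ↦ by
      rw [covariance_fun_sub_right (hL2 j) (hL2 k) ((hL2 j).const_mul _),
        covariance_const_mul_right, covariance_self (hL2 j).aemeasurable, hvar, mul_one, sub_self]
  have h_smul (ω : Ω) : Y ω - Y ω j • ρ = fun k ↦ Y ω k - ρ k * Y ω j := by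
    funext k
    simp [mul_comm]
  simp only [h_smul]
  exact h_indep.comp (measurable_pi_apply ()) measurable_id

lemma measure_mem_firstArgmax_and_mem_le [Finite ι] [LinearOrder ι] (hY : HasGaussianLaw Y P)
    (hvar : ∀ k, Var[fun ω ↦ Y ω k; P] = 1) (j : ι) {T : ℝ} (hT : 0 ≤ T) {I : Set ℝ}
    (hI : MeasurableSet I) :
    P {ω | Y ω ∈ firstArgmax j ∧ Y ω j ∈ I}
      ≤ volume I * (ENNReal.ofReal (T + 1) * P {ω | Y ω ∈ firstArgmax j} + gaussianPDF 0 1 T) := by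
  have := hY.isProbabilityMeasure
  have hL2 (k : ι) : MemLp (fun ω ↦ Y ω k) 2 P := (hY.eval k).memLp_two
  set ρ : ι → ℝ := fun k ↦ cov[fun ω ↦ Y ω j, fun ω ↦ Y ω k; P]
  have hρ (k : ι) : ρ k ≤ ρ j := by
    have hρj : ρ j = 1 := (covariance_self (hL2 j).aemeasurable).trans (hvar j)
    linarith [two_mul_covariance_le (hL2 j) (hL2 k), hvar j, hvar k]
  let S : Set (ℝ × (ι → ℝ)) := {p | p.2 + p.1 • ρ ∈ firstArgmax j}
  have hS : MeasurableSet S := by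
    refine (measurableSet_firstArgmax j).preimage (f := fun p : ℝ × (ι → ℝ) ↦ p.2 + p.1 • ρ) ?_
    fun_prop
  have hS_upper (w : ι → ℝ) : IsUpperSet {x | (x, w) ∈ S} := fun x x' hx h ↦ by
    have h_shift := add_smul_mem_firstArgmax h hρ (sub_nonneg.mpr hx)
    rwa [add_assoc, ← add_smul, add_sub_cancel] at h_shift
  have hW : AEMeasurable (fun ω ↦ Y ω - Y ω j • ρ) P :=
    hY.aemeasurable.sub ((hL2 j).aemeasurable.smul_const ρ)
  simpa [S] using measure_mem_and_mem_le_of_indepFun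
    (hasLaw_gaussianReal_of_variance_eq_one (hY.eval j) (hvar j)) hW
    (indepFun_sub_covariance_smul hY (hvar j)) hS hS_upper hI hT

lemma sum_measure_firstArgmax_le_one [Fintype ι] [LinearOrder ι] [IsProbabilityMeasure P]
    (hY : AEMeasurable Y P) : ∑ j, P {ω | Y ω ∈ firstArgmax j} ≤ 1 :=
  measure_univ (μ := P) ▸ sum_measure_le_measure_univ
    (fun j _ ↦ hY.nullMeasurableSet_preimage (measurableSet_firstArgmax j))
    fun _ _ _ _ hij ↦ ((pairwise_disjoint_firstArgmax hij).preimage Y).aedisjoint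

theorem measure_iSup_mem_le_of_variance_eq_one [Fintype ι] [Nonempty ι] (hY : HasGaussianLaw Y P)
    (hvar : ∀ j, Var[fun ω ↦ Y ω j; P] = 1) {I : Set ℝ} (hI : MeasurableSet I) :
    P {ω | (⨆ j, Y ω j) ∈ I}
      ≤ volume I * ENNReal.ofReal (√(2 * Real.log (Fintype.card ι)) + 2) := by
  have := hY.isProbabilityMeasure
  obtain ⟨_, _⟩ := exists_wellFoundedLT ι
  set T := √(2 * Real.log (Fintype.card ι))
  have h_cover : {ω | (⨆ j, Y ω j) ∈ I} ⊆ ⋃ j, {ω | Y ω ∈ firstArgmax j ∧ Y ω j ∈ I} := by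
    intro ω hω
    obtain ⟨j, hj⟩ := exists_mem_firstArgmax (Y ω)
    exact mem_iUnion.mpr ⟨j, hj, iSup_eq_of_mem_firstArgmax hj ▸ hω⟩
  calc P {ω | (⨆ j, Y ω j) ∈ I}
    _ ≤ ∑ j, P {ω | Y ω ∈ firstArgmax j ∧ Y ω j ∈ I} :=
      (measure_mono h_cover).trans (measure_iUnion_fintype_le _ _)
    _ ≤ ∑ j, volume I *
          (ENNReal.ofReal (T + 1) * P {ω | Y ω ∈ firstArgmax j} + gaussianPDF 0 1 T) :=
      Finset.sum_le_sum fun j _ ↦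
        measure_mem_firstArgmax_and_mem_le hY hvar j (Real.sqrt_nonneg _) hI
    _ = volume I * (ENNReal.ofReal (T + 1) * ∑ j, P {ω | Y ω ∈ firstArgmax j}
          + Fintype.card ι * gaussianPDF 0 1 T) := by
      rw [← Finset.mul_sum, Finset.sum_add_distrib, ← Finset.mul_sum, Finset.sum_const,
        Finset.card_univ, nsmul_eq_mul]
    _ ≤ volume I * (ENNReal.ofReal (T + 1) * 1 + 1) := by
      gcongr
      · exact sum_measure_firstArgmax_le_one hY.aemeasurable
      · exact nat_mul_gaussianPDF_sqrt_two_mul_log_le_one _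
    _ = volume I * ENNReal.ofReal (T + 2) := by
      rw [mul_one, ← ENNReal.ofReal_one, ← ENNReal.ofReal_add (by positivity) zero_le_one,
        add_assoc, one_add_one_eq_two]

lemma hasGaussianLaw_sub_div [Finite ι] {Z : Ω → ι → ℝ} (hZ : HasGaussianLaw Z P) (z s : ι → ℝ) :
    HasGaussianLaw (fun ω j ↦ (Z ω j - z j) / s j) P := by
  have := Fintype.ofFinite ι
  have := hZ.isGaussian_map
  have h_sub : HasGaussianLaw (fun ω ↦ Z ω - z) P :=
    ⟨AEMeasurable.map_map_of_aemeasurable (g := (· - z)) (by fun_prop) hZ.aemeasurable ▸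
      inferInstance⟩
  simp only [div_eq_inv_mul]
  exact h_sub.map_fun (ContinuousLinearMap.pi fun j ↦ (s j)⁻¹ • .proj j)

lemma variance_sub_div_sqrt_variance [IsProbabilityMeasure P] {X : Ω → ℝ}
    (hX : AEStronglyMeasurable X P) (hvar : 0 < Var[X; P]) (c : ℝ) :
    Var[fun ω ↦ (X ω - c) / √Var[X; P]; P] = 1 := by
  simp only [div_eq_mul_inv]
  rw [variance_mul_const, variance_sub_const hX, inv_pow, Real.sq_sqrt hvar.le,
    mul_inv_cancel₀ hvar.ne']

theorem stmt10_general [Fintype ι] {Z : Ω → ι → ℝ} (hZ : HasGaussianLaw Z P) {σ : ℝ} (hσ : 0 < σ)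
    (hvar : ∀ j, σ ^ 2 ≤ Var[fun ω ↦ Z ω j; P]) (z : ι → ℝ) {ε : ℝ} (hε : 0 ≤ ε) :
    P.real {ω | ∀ j, Z ω j ≤ z j + ε} - P.real {ω | ∀ j, Z ω j ≤ z j}
      ≤ ε / σ * (√(2 * Real.log (Fintype.card ι)) + 2) := by
  have := hZ.isProbabilityMeasure
  rcases isEmpty_or_nonempty ι
  · simp only [IsEmpty.forall_iff, sub_self]
    positivity
  let s (j : ι) : ℝ := √Var[fun ω ↦ Z ω j; P]
  let Y (ω : Ω) (j : ι) : ℝ := (Z ω j - z j) / s j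
  have hσs (j : ι) : σ ≤ s j := Real.le_sqrt_of_sq_le (hvar j)
  have hY_var (j : ι) : Var[fun ω ↦ Y ω j; P] = 1 :=
    variance_sub_div_sqrt_variance (hZ.eval j).aemeasurable.aestronglyMeasurable
      (lt_of_lt_of_le (by positivity) (hvar j)) (z j)
  have h_subset : {ω | ∀ j, Z ω j ≤ z j + ε} \ {ω | ∀ j, Z ω j ≤ z j} ⊆
      {ω | (⨆ j, Y ω j) ∈ Ioc 0 (ε / σ)} := by
    rintro ω ⟨h_le, h_exceeds⟩
    obtain ⟨i, hi⟩ : ∃ i, z i < Z ω i := by simpa using h_exceeds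
    refine ⟨?_, ciSup_le fun j ↦ div_le_div₀ hε (by linarith [h_le j]) hσ (hσs j)⟩
    exact (div_pos (sub_pos.mpr hi) (hσ.trans_le (hσs i))).trans_le
      (le_ciSup (Finite.bddAbove_range (Y ω)) i)
  have h_anticoncentration := measure_iSup_mem_le_of_variance_eq_one
    (hasGaussianLaw_sub_div hZ z s) hY_var (measurableSet_Ioc (a := 0) (b := ε / σ))
  rw [Real.volume_Ioc, sub_zero, ← ENNReal.ofReal_mul (by positivity)] at h_anticoncentration
  calc P.real {ω | ∀ j, Z ω j ≤ z j + ε} - P.real {ω | ∀ j, Z ω j ≤ z j}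
    _ ≤ P.real ({ω | ∀ j, Z ω j ≤ z j + ε} \ {ω | ∀ j, Z ω j ≤ z j}) := le_measureReal_sdiff
    _ ≤ P.real {ω | (⨆ j, Y ω j) ∈ Ioc 0 (ε / σ)} := measureReal_mono h_subset
    _ ≤ ε / σ * (√(2 * Real.log (Fintype.card ι)) + 2) :=
      ENNReal.toReal_le_of_le_ofReal (by positivity) h_anticoncentration

lemma hasGaussianLaw_of_map_eq_gaussianReal {E : Type*} [TopologicalSpace E] [AddCommMonoid E]
    [Module ℝ E] [MeasurableSpace E] [OpensMeasurableSpace E] {X : Ω → E} (hX : AEMeasurable X P)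
    (h : ∀ L : E →L[ℝ] ℝ, ∃ (m : ℝ) (v : ℝ≥0), P.map (fun ω ↦ L (X ω)) = gaussianReal m v) :
    HasGaussianLaw X P := by
  refine ⟨isGaussian_of_map_eq_gaussianReal fun L ↦ ?_⟩
  rw [AEMeasurable.map_map_of_aemeasurable L.continuous.measurable.aemeasurable hX]
  exact h L

lemma variance_eq_integral_sq_of_hasLaw_gaussianReal {X : Ω → ℝ} {v : ℝ≥0}
    (hX : HasLaw X (gaussianReal 0 v) P) : Var[X; P] = ∫ ω, X ω ^ 2 ∂P :=
  variance_of_integral_eq_zero hX.aemeasurable (hX.integral_eq.trans integral_id_gaussianReal)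

end GaussianVector

lemma sqrt_two_mul_log_add_two_le {x : ℝ} (hx : 3 ≤ x) :
    √(2 * Real.log x) + 2 ≤ 4 * √(Real.log x) := by
  have h_log : 1 ≤ Real.log x :=
    (Real.le_log_iff_exp_le (by linarith)).mpr (by linarith [Real.exp_one_lt_d9])
  have h_sqrt_log : 1 ≤ √(Real.log x) := Real.one_le_sqrt.mpr h_log
  have h_sqrt_two : √2 ≤ 2 := Real.sqrt_le_iff.mpr (by norm_num)
  rw [Real.sqrt_mul zero_le_two]
  linarith [mul_le_mul_of_nonneg_right h_sqrt_two (Real.sqrt_nonneg (Real.log x))]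

/-- Nazarov's inequality.  There is a universal constant C such that for
every d ≥ 3 and every centered Gaussian vector Z in ℝ^d with E[Z_j²] ≥ 1 for all j,
for all z and ε > 0, P(Z ≤ z + ε·1) − P(Z ≤ z) ≤ C ε √(log d). -/
theorem stmt10 :
    ∃ C : ℝ, 0 < C ∧
      ∀ (d : ℕ), 3 ≤ d →
      ∀ (Ω : Type) (_ : MeasurableSpace Ω) (μ : Measure Ω), IsProbabilityMeasure μ →
      ∀ (Z : Ω → Fin d → ℝ), Measurable Z →
      (∀ l : (Fin d → ℝ) →ₗ[ℝ] ℝ, ∃ v : NNReal,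
        μ.map (fun ω => l (Z ω)) = gaussianReal 0 v) →
      (∀ j, 1 ≤ ∫ ω, (Z ω j) ^ 2 ∂μ) →
      ∀ (z : Fin d → ℝ) (ε : ℝ), 0 < ε →
        (μ {ω | ∀ j, Z ω j ≤ z j + ε}).toReal - (μ {ω | ∀ j, Z ω j ≤ z j}).toReal
          ≤ C * ε * Real.sqrt (Real.log d) := by
  refine ⟨4, by norm_num, fun d hd Ω _ μ _ Z hZ h_gauss h_sq z ε hε ↦ ?_⟩
  have h_law : HasGaussianLaw Z μ :=
    hasGaussianLaw_of_map_eq_gaussianReal hZ.aemeasurable fun L ↦ ⟨0, h_gauss L⟩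
  have h_var (j : Fin d) : 1 ^ 2 ≤ Var[fun ω ↦ Z ω j; μ] := by
    obtain ⟨v, hv⟩ := h_gauss (LinearMap.proj j)
    have h_coord : HasLaw (fun ω ↦ Z ω j) (gaussianReal 0 v) μ := ⟨by fun_prop, hv⟩
    rw [one_pow, variance_eq_integral_sq_of_hasLaw_gaussianReal h_coord]
    exact h_sq j
  refine (stmt10_general h_law one_pos h_var z hε.le).trans ?_
  rw [div_one, Fintype.card_fin, mul_comm 4, mul_assoc]
  exact mul_le_mul_of_nonneg_left (sqrt_two_mul_log_add_two_le (mod_cast hd)) hε.le
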